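/- Let M be an acyclic module over a finite alphabet Λ with input set I of size k and node set S, let ω : I → S be total, and let F = ↻_ω M. Then for every c ≥ 1, the number of attractors of size c of F is at most |Λ|^{k·c}. -/

import Mathlib

/-- A module over alphabet `Λ` with node set `S` and input set `I`:
a family of local functions `f s : Λ^S → Λ^I → Λ`. -/
structure AModule (Λ S I : Type) where
  f : S → (S → Λ) → (I → Λ) → Λ

namespace AModule

variable {Λ S I : Type}

/-- One-step update `M(x,i)`. -/
def upd (M : AModule Λ S I) (x : S → Λ) (i : I → Λ) : S → Λ :=
  fun s => M.f s x i

/-- Iterated update `M(x,(i_1,…,i_m))`, defined by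
`M(x,∅) = x` and `M(x,(i_1,…,i_m)) = M(M(x,i_1),(i_2,…,i_m))`. -/
def seqUpd (M : AModule Λ S I) (x : S → Λ) {m : ℕ} (J : Fin m → I → Λ) : S → Λ :=
  (List.ofFn J).foldl M.upd x

/-- Node `s` influences node `s'`: two configurations over `S ∪ I` differing
exactly at `s` (so with the same input part) on which `f_{s'}` differs. -/
def Influences (M : AModule Λ S I) (s s' : S) : Prop :=
  ∃ (x x' : S → Λ) (i : I → Λ),
    (∀ r, r ≠ s → x r = x' r) ∧ x s ≠ x' s ∧ M.f s' x i ≠ M.f s' x' i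

/-- `M` is acyclic: its interaction digraph has no directed cycle. -/
def Acyclic (M : AModule Λ S I) : Prop :=
  ∀ s, ¬ Relation.TransGen M.Influences s s

/-- `O` is an output function of delay `m` for node `s`. -/
def IsOutputFn (M : AModule Λ S I) (s : S) {m : ℕ}
    (O : (Fin m → I → Λ) → Λ) : Prop :=
  ∀ (x : S → Λ) (J : Fin m → I → Λ), M.seqUpd x J s = O J

/-- The set of delays `m ≥ 1` for which `s` admits an output function. -/
def delaySet (M : AModule Λ S I) (s : S) : Set ℕ :=
  {m | 1 ≤ m ∧ ∃ O : (Fin m → I → Λ) → Λ, M.IsOutputFn s O}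

/-- The complete recursive wiring `↻_ω M` as a map on configurations:
`F(x)_s = f_s(x, (x_{ω(α)})_{α ∈ I})`. -/
def wireF (M : AModule Λ S I) (ω : I → S) : (S → Λ) → (S → Λ) :=
  fun x => M.upd x (fun α => x (ω α))

/-- The input sequence of length `k` generated by `x`:
`Ĵ(x)^k_ℓ = F^{ℓ-1}(x)|_{ω(I)}`. -/
def genSeq (M : AModule Λ S I) (ω : I → S) (x : S → Λ) (k : ℕ) :
    Fin k → I → Λ :=
  fun ℓ α => (M.wireF ω)^[ℓ.val] x (ω α)

end AModule

/-- An attractor of size `c` of the parallel map `F`: the (finite) periodic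
orbit of a configuration whose minimal period is `c`. -/
def IsAttractor {Λ S : Type} (F : (S → Λ) → (S → Λ)) (c : ℕ)
    (X : Set (S → Λ)) : Prop :=
  ∃ x : S → Λ, Function.minimalPeriod F x = c ∧ X = {y | ∃ j : ℕ, y = F^[j] x}

theorem AModule.f_congr {Λ S I : Type} (M : AModule Λ S I) (s : S) (i : I → Λ)
    (T : Finset S) : ∀ x x' : S → Λ, (∀ r, r ∉ T → x r = x' r) →
      (∀ r, M.Influences r s → x r = x' r) → M.f s x i = M.f s x' i := by
  classical
  induction T using Finset.induction_on with
  | empty =>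
    intro x x' h _
    have : x = x' := funext fun r => h r (by simp)
    rw [this]
  | insert a T ha ih =>
    intro x x' h hinf
    have h1 : M.f s x i = M.f s (Function.update x a (x' a)) i := by
      by_contra hne
      by_cases hxa : x a = x' a
      · rw [← hxa, Function.update_eq_self] at hne
        exact hne rfl
      · refine hxa (hinf a ⟨x, _, i, ?_, ?_, hne⟩)
        · intro r hr
          simp [Function.update_of_ne hr]
        · simpa using hxa
    rw [h1]
    apply ih
    · intro r hr
      by_cases hra : r = a
      · subst hra; simp
      · rw [Function.update_of_ne hra]
        exact h r (by simp [hra, hr])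
    · intro r hr
      by_cases hra : r = a
      · subst hra; simp
      · rw [Function.update_of_ne hra]
        exact hinf r hr

theorem AModule.eq_of_genSeq {Λ S I : Type} [Fintype S]
    (M : AModule Λ S I) (hM : M.Acyclic) (ω : I → S) (c : ℕ) (hc : 1 ≤ c)
    (x y : S → Λ) (hx : Function.IsPeriodicPt (M.wireF ω) c x)
    (hy : Function.IsPeriodicPt (M.wireF ω) c y)
    (h : M.genSeq ω x c = M.genSeq ω y c) : x = y := by
  have hin : ∀ n α, (M.wireF ω)^[n] x (ω α) = (M.wireF ω)^[n] y (ω α) := by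
    intro n α
    rw [← hx.iterate_mod_apply n, ← hy.iterate_mod_apply n]
    exact congrFun (congrFun h ⟨n % c, Nat.mod_lt _ hc⟩) α
  have wf : WellFounded (Relation.TransGen M.Influences) := by
    haveI : Std.Irrefl (Relation.TransGen M.Influences) := ⟨hM⟩
    exact Finite.wellFounded_of_trans_of_irrefl _
  have key : ∀ s n, (M.wireF ω)^[n] x s = (M.wireF ω)^[n] y s := by
    intro s
    induction s using wf.induction with
    | _ s ih =>
      have hs : ∀ n, (M.wireF ω)^[n + 1] x s = (M.wireF ω)^[n + 1] y s := by
        intro n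
        rw [Function.iterate_succ_apply', Function.iterate_succ_apply']
        have e : (fun α => (M.wireF ω)^[n] x (ω α)) = fun α => (M.wireF ω)^[n] y (ω α) :=
          funext (hin n)
        change M.f s _ (fun α => (M.wireF ω)^[n] x (ω α)) =
          M.f s _ (fun α => (M.wireF ω)^[n] y (ω α))
        rw [e]
        exact M.f_congr s _ Finset.univ _ _ (fun r hr => absurd (Finset.mem_univ r) hr)
          (fun r hr => ih r (Relation.TransGen.single hr) n)
      intro n
      cases n with
      | succ n => exact hs n
      | zero =>
        have := hs (c - 1)
        rw [Nat.sub_add_cancel hc, hx.eq, hy.eq] at this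
        exact this
  exact funext fun s => key s 0

/-- the number of attractors of size `c` of the complete
recursive wiring of an acyclic module with `k` inputs is at most `|Λ|^{k·c}`. -/
theorem statement10 {Λ S I : Type} [Fintype Λ] [Fintype S] [Fintype I]
    (hΛ : 2 ≤ Fintype.card Λ) (k : ℕ) (hk : Fintype.card I = k)
    (M : AModule Λ S I) (hM : M.Acyclic) (ω : I → S)
    (c : ℕ) (hc : 1 ≤ c) :
    Nat.card {X : Set (S → Λ) // IsAttractor (M.wireF ω) c X} ≤
      Fintype.card Λ ^ (k * c) := by
  classical
  have hp : ∀ X : {X : Set (S → Λ) // IsAttractor (M.wireF ω) c X},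
      Function.IsPeriodicPt (M.wireF ω) c X.2.choose := by
    intro X
    have := Function.isPeriodicPt_minimalPeriod (M.wireF ω) X.2.choose
    rwa [X.2.choose_spec.1] at this
  have hinj : Function.Injective
      (fun X : {X : Set (S → Λ) // IsAttractor (M.wireF ω) c X} =>
        M.genSeq ω X.2.choose c) := by
    intro X Y hXY
    have e := M.eq_of_genSeq hM ω c hc _ _ (hp X) (hp Y) hXY
    apply Subtype.ext
    rw [X.2.choose_spec.2, Y.2.choose_spec.2, e]
  have := Nat.card_le_card_of_injective _ hinj
  refine this.trans (le_of_eq ?_)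
  simp [Nat.card_eq_fintype_card, hk, pow_mul]
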